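/- Let p ∈ (0,1] and let ξ ∼ Bernoulli(p). Then the smoothed estimator ḡ_T is mean-squared smooth with constant 328/√p: for all x, y ∈ ℝ^T, E_ξ[‖ḡ_T(x,ξ) − ḡ_T(y,ξ)‖²] ≤ (328²/p)·‖x − y‖² (Euclidean norm). -/

import Mathlib

open MeasureTheory

/-- The scalar function `Ψ` of the hard-instance construction. -/
noncomputable def Psi (t : ℝ) : ℝ :=
  if t ≤ 1 / 2 then 0 else Real.exp (1 - 1 / (2 * t - 1) ^ 2)

/-- The scalar function `Φ(t) = √e ∫_{−∞}^t e^{−τ²/2} dτ` of the hard-instance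
construction. -/
noncomputable def Phi (t : ℝ) : ℝ :=
  Real.sqrt (Real.exp 1) * ∫ τ in Set.Iic t, Real.exp (-τ ^ 2 / 2)

/-- The hard-instance chain function `F_T` on `ℝ^{T+1}` (so the paper's dimension `T ≥ 1`
is `T + 1` here; the paper's coordinate `xᵢ`, `1 ≤ i ≤ T`, is the zero-based coordinate
`x (i−1)`). -/
noncomputable def chainF (T : ℕ) (x : EuclideanSpace ℝ (Fin (T + 1))) : ℝ :=
  -Psi 1 * Phi (x 0) +
    ∑ i : Fin T,
      (Psi (-(x i.castSucc)) * Phi (-(x i.succ)) - Psi (x i.castSucc) * Phi (x i.succ))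

/-- `prog α x` is the largest one-based index `i ∈ {0, 1, …, n}` such that `|xᵢ| > α`
(with the paper's convention `x₀ ≡ 1`, so the value `0` is allowed and returned when no
coordinate exceeds `α`). -/
noncomputable def prog {n : ℕ} (α : ℝ) (x : EuclideanSpace ℝ (Fin n)) : ℕ :=
  (Finset.univ.filter fun i : Fin n => α < |x i|).sup fun i => (i : ℕ) + 1

/-- The bump function `Λ` supported on `(1/4, 1/2)`. -/
noncomputable def Lam (t : ℝ) : ℝ :=
  if 1 / 4 < t ∧ t < 1 / 2 then
    Real.exp (-1 / (100 * (t - 1 / 4) * (1 / 2 - t)))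
  else 0

/-- The integrated bump function `Γ(t) = (∫_{1/4}^t Λ) / (∫_{1/4}^{1/2} Λ)`. -/
noncomputable def Gam (t : ℝ) : ℝ :=
  (∫ τ in (1 / 4 : ℝ)..t, Lam τ) / ∫ τ in (1 / 4 : ℝ)..(1 / 2 : ℝ), Lam τ

/-- `Θ_i(x) = Γ(1 − ‖(Γ(|x_i|), …, Γ(|x_T|))‖₂)`. -/
noncomputable def Theta (T : ℕ) (x : EuclideanSpace ℝ (Fin (T + 1)))
    (i : Fin (T + 1)) : ℝ :=
  Gam (1 - Real.sqrt (∑ j ∈ Finset.univ.filter fun j : Fin (T + 1) => i ≤ j,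
    Gam |x j| ^ 2))

/-- The smoothed estimator `[ḡ_T(x,ξ)]ᵢ = ∂ᵢF_T(x)·(1 + Θᵢ(x)(ξ/p − 1))`, for
`ξ ∈ {0, 1} ⊆ ℝ`. -/
noncomputable def gbar (T : ℕ) (p : ℝ) (x : EuclideanSpace ℝ (Fin (T + 1)))
    (ξ : ℝ) : EuclideanSpace ℝ (Fin (T + 1)) :=
  WithLp.toLp 2 fun i => gradient (chainF T) x i * (1 + Theta T x i * (ξ / p - 1))


/-! The gradient of the chain function is the sum of an incoming part, the derivatives of the links
`(x (i - 1), x i)` in their second variable, and an outgoing part, the derivatives of the links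
`(x i, x (i + 1))` in their first variable. Both are Lipschitz, with constants `11` and `262`.

Writing `W` for the gradient weighted coordinatewise by `Θ`, the estimator is
`∇F + (ξ / p - 1) • W`, so the Bernoulli mean splits as
`‖∇F x - ∇F y‖ ^ 2 + (1 - p) / p * ‖W x - W y‖ ^ 2`, and it suffices that `∇F` and `W` are both
`328`-Lipschitz. The weight `Θ_i` vanishes as soon as `1 / 2 ≤ |x j|` for some `j ≥ i`, while the
derivatives of a link vanish when its first variable is at most `1 / 2` in absolute value. Hence
`Θ` annihilates the outgoing part, and `W x` has at most one nonzero coordinate: if the incoming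
part is nonzero at `k`, then `1 / 2 < |x (k - 1)|`, which kills `Θ_i` for every `i < k`. Thus `W x`
and `W y` differ in at most two coordinates, and in each of them by at most
`(11 + 4.5 * 6.9 ^ 2) * ‖x - y‖`. -/

lemma l2_norm_le_of_forall_norm_le {ι : Type*} [Fintype ι] {α β : ι → Type*}
    [∀ i, SeminormedAddCommGroup (α i)] [∀ i, SeminormedAddCommGroup (β i)]
    {u : PiLp 2 α} {v : PiLp 2 β} (h : ∀ i, ‖u i‖ ≤ ‖v i‖) : ‖u‖ ≤ ‖v‖ := by
  rw [PiLp.norm_eq_of_L2, PiLp.norm_eq_of_L2]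
  gcongr with i
  exact h i

lemma l2_norm_le_add_of_forall_norm_le_add {ι 𝕜 : Type*} [Fintype ι] [RCLike 𝕜]
    {u v w : EuclideanSpace 𝕜 ι} {a b : ℝ} (ha : 0 ≤ a) (hb : 0 ≤ b)
    (h : ∀ i, ‖u i‖ ≤ a * ‖v i‖ + b * ‖w i‖) : ‖u‖ ≤ a * ‖v‖ + b * ‖w‖ := by
  let norms (z : EuclideanSpace 𝕜 ι) : EuclideanSpace ℝ ι := WithLp.toLp 2 fun i => ‖z i‖
  have norm_norms (z : EuclideanSpace 𝕜 ι) : ‖norms z‖ = ‖z‖ := by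
    simp [EuclideanSpace.norm_eq, norms]
  calc ‖u‖ ≤ ‖a • norms v + b • norms w‖ :=
        l2_norm_le_of_forall_norm_le fun i => (h i).trans (le_abs_self _)
    _ ≤ ‖a • norms v‖ + ‖b • norms w‖ := norm_add_le _ _
    _ = a * ‖v‖ + b * ‖w‖ := by
        rw [norm_smul, norm_smul, Real.norm_of_nonneg ha, Real.norm_of_nonneg hb, norm_norms,
          norm_norms]

lemma norm_cons_zero_castSucc_le {𝕜 : Type*} [RCLike 𝕜] {n : ℕ}
    (z : EuclideanSpace 𝕜 (Fin (n + 1))) :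
    ‖(WithLp.toLp 2 (Fin.cons (α := fun _ => 𝕜) 0 fun k => z k.castSucc) :
      EuclideanSpace 𝕜 (Fin (n + 1)))‖ ≤ ‖z‖ := by
  rw [EuclideanSpace.norm_eq, EuclideanSpace.norm_eq z]
  refine Real.sqrt_le_sqrt ?_
  rw [Fin.sum_univ_succ, Fin.sum_univ_castSucc fun i => ‖z i‖ ^ 2]
  simp

lemma norm_snoc_succ_zero_le {𝕜 : Type*} [RCLike 𝕜] {n : ℕ}
    (z : EuclideanSpace 𝕜 (Fin (n + 1))) :
    ‖(WithLp.toLp 2 (Fin.snoc (α := fun _ => 𝕜) (fun k => z k.succ) 0) :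
      EuclideanSpace 𝕜 (Fin (n + 1)))‖ ≤ ‖z‖ := by
  rw [EuclideanSpace.norm_eq, EuclideanSpace.norm_eq z]
  refine Real.sqrt_le_sqrt ?_
  rw [Fin.sum_univ_castSucc, Fin.sum_univ_succ fun i => ‖z i‖ ^ 2]
  simp

lemma norm_sub_sq_le_of_subsingleton_support {ι 𝕜 : Type*} [Fintype ι] [RCLike 𝕜]
    {u v : EuclideanSpace 𝕜 ι} {C : ℝ} (hu : {i | u i ≠ 0}.Subsingleton)
    (hv : {i | v i ≠ 0}.Subsingleton) (h : ∀ i, ‖u i - v i‖ ≤ C) :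
    ‖u - v‖ ^ 2 ≤ 2 * C ^ 2 := by
  classical
  have card_le (w : EuclideanSpace 𝕜 ι) (hw : {i | w i ≠ 0}.Subsingleton) :
      (Finset.univ.filter fun i => w i ≠ 0).card ≤ 1 :=
    Finset.card_le_one.2 fun i hi j hj => hw (Finset.mem_filter.1 hi).2 (Finset.mem_filter.1 hj).2
  set s : Finset ι :=
    (Finset.univ.filter fun i => u i ≠ 0) ∪ Finset.univ.filter fun i => v i ≠ 0 with hs
  have hcard : (s.card : ℝ) ≤ 2 := by
    exact_mod_cast (Finset.card_union_le _ _).trans (add_le_add (card_le u hu) (card_le v hv))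
  have hsupp (i : ι) (hi : i ∉ s) : ‖u i - v i‖ ^ 2 = 0 := by
    simp only [hs, Finset.mem_union, Finset.mem_filter_univ, not_or, not_not] at hi
    simp [hi.1, hi.2]
  calc ‖u - v‖ ^ 2 = ∑ i, ‖u i - v i‖ ^ 2 := EuclideanSpace.norm_sq_eq _
    _ = ∑ i ∈ s, ‖u i - v i‖ ^ 2 :=
        (Finset.sum_subset (Finset.subset_univ s) fun i _ hi => hsupp i hi).symm
    _ ≤ s.card • C ^ 2 := Finset.sum_le_card_nsmul _ _ _ fun i _ => by gcongr; exact h i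
    _ ≤ 2 * C ^ 2 := by rw [nsmul_eq_mul]; gcongr

lemma bernoulli_mean_norm_sq {E : Type*} [NormedAddCommGroup E] [InnerProductSpace ℝ E]
    {p : ℝ} (hp : p ≠ 0) (v w : E) :
    p * ‖v + (1 / p - 1) • w‖ ^ 2 + (1 - p) * ‖v + (0 / p - 1) • w‖ ^ 2
      = ‖v‖ ^ 2 + (1 - p) / p * ‖w‖ ^ 2 := by
  simp only [norm_add_sq_real, norm_smul, mul_pow, inner_smul_right, Real.norm_eq_abs, sq_abs]
  field_simp
  ring

lemma abs_mul_sub_mul_le {R : Type*} [CommRing R] [LinearOrder R] [IsStrictOrderedRing R]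
    (a b c d : R) : |a * b - c * d| ≤ |a - c| * |b| + |c| * |b - d| :=
  calc |a * b - c * d| = |(a - c) * b + c * (b - d)| := by congr 1; ring
    _ ≤ |(a - c) * b| + |c * (b - d)| := abs_add_le _ _
    _ = |a - c| * |b| + |c| * |b - d| := by rw [abs_mul, abs_mul]

lemma pow_mul_exp_neg_le (n : ℕ) {w : ℝ} (hw : 0 ≤ w) :
    w ^ n * Real.exp (-w) ≤ n ^ n * Real.exp (-n) := by
  rcases Nat.eq_zero_or_pos n with rfl | hn
  · simpa using hw
  have hn' : (0 : ℝ) < n := by exact_mod_cast hn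
  have hroot : w / n ≤ Real.exp (w / n - 1) := by linarith [Real.add_one_le_exp (w / n - 1)]
  have hpow : (w / n) ^ n ≤ Real.exp (w - n) :=
    calc (w / n) ^ n ≤ Real.exp (w / n - 1) ^ n := by gcongr
      _ = Real.exp (w - n) := by rw [← Real.exp_nat_mul]; congr 1; field_simp
  calc w ^ n * Real.exp (-w) = n ^ n * (w / n) ^ n * Real.exp (-w) := by
        rw [← mul_pow, mul_div_cancel₀ _ hn'.ne']
    _ ≤ n ^ n * Real.exp (w - n) * Real.exp (-w) := by gcongr
    _ = n ^ n * Real.exp (-n) := by rw [mul_assoc, ← Real.exp_add]; congr 2; ring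

lemma hasDerivAt_integral_Iic {E : Type*} [NormedAddCommGroup E] [NormedSpace ℝ E]
    [CompleteSpace E] {f : ℝ → E} {t : ℝ} (hf : Integrable f) (ht : ContinuousAt f t) :
    HasDerivAt (fun u => ∫ τ in Set.Iic u, f τ) (f t) t := by
  have hsplit : (fun u => ∫ τ in Set.Iic u, f τ) =
      fun u => (∫ τ in t..u, f τ) + ∫ τ in Set.Iic t, f τ := by
    funext u
    rw [← intervalIntegral.integral_Iic_sub_Iic hf.integrableOn hf.integrableOn, sub_add_cancel]
  rw [hsplit]
  exact (intervalIntegral.integral_hasDerivAt_right hf.intervalIntegrable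
    hf.aestronglyMeasurable.stronglyMeasurableAtFilter ht).add_const _

lemma exp_one_le : Real.exp 1 ≤ 2.72 := Real.exp_one_lt_d9.le.trans (by norm_num)

lemma exp_neg_one_le : Real.exp (-1) ≤ 0.368 := Real.exp_neg_one_lt_d9.le.trans (by norm_num)

lemma exp_half_le : Real.exp (1 / 2) ≤ 1.65 := by
  rw [Real.exp_half]
  exact Real.sqrt_le_iff.2 ⟨by norm_num, exp_one_le.trans (by norm_num)⟩

/-! ### The function `Ψ` -/

lemma Psi_of_le {t : ℝ} (h : t ≤ 1 / 2) : Psi t = 0 := if_pos h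

lemma Psi_of_lt {t : ℝ} (h : 1 / 2 < t) : Psi t = Real.exp (1 - 1 / (2 * t - 1) ^ 2) :=
  if_neg h.not_ge

lemma Psi_nonneg (t : ℝ) : 0 ≤ Psi t := by
  unfold Psi; split_ifs <;> positivity

-- At `t = 1 / 2` the quotients `Psi t / (2 * t - 1) ^ n` take the junk value `0`, which is also
-- their limit, so bounds and derivatives need no exception there.
lemma Psi_div_even_pow_le (n : ℕ) (t : ℝ) :
    Psi t / (2 * t - 1) ^ (2 * n) ≤ n ^ n * Real.exp (1 - n) := by
  rcases le_or_gt t (1 / 2) with h | h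
  · rw [Psi_of_le h, zero_div]; positivity
  calc Psi t / (2 * t - 1) ^ (2 * n)
      = Real.exp 1 * ((1 / (2 * t - 1) ^ 2) ^ n * Real.exp (-(1 / (2 * t - 1) ^ 2))) := by
        rw [Psi_of_lt h, sub_eq_add_neg, Real.exp_add, pow_mul, one_div_pow]; ring
    _ ≤ Real.exp 1 * (n ^ n * Real.exp (-n)) :=
        mul_le_mul_of_nonneg_left (pow_mul_exp_neg_le n (by positivity)) (Real.exp_pos 1).le
    _ = n ^ n * Real.exp (1 - n) := by rw [sub_eq_add_neg, Real.exp_add]; ring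

lemma Psi_le (t : ℝ) : Psi t ≤ 2.72 := by
  simpa using (Psi_div_even_pow_le 0 t).trans (by simpa using exp_one_le)

lemma Psi_div_sq_le (t : ℝ) : Psi t / (2 * t - 1) ^ 2 ≤ 1 := by
  simpa using Psi_div_even_pow_le 1 t

lemma Psi_div_pow_four_le (t : ℝ) : Psi t / (2 * t - 1) ^ 4 ≤ 1.472 := by
  have h := Psi_div_even_pow_le 2 t
  norm_num at h
  linarith [exp_neg_one_le]

lemma Psi_div_pow_six_le (t : ℝ) : Psi t / (2 * t - 1) ^ 6 ≤ 3.68 := by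
  have h := Psi_div_even_pow_le 3 t
  have hexp : Real.exp (-2) = Real.exp (-1) ^ 2 := by rw [← Real.exp_nat_mul]; norm_num
  norm_num [hexp] at h
  nlinarith [exp_neg_one_le, Real.exp_pos (-1)]

lemma abs_Psi_div_pow_le (n : ℕ) (t : ℝ) :
    |Psi t / (2 * t - 1) ^ n| ≤ (n + 1) ^ (n + 1) * Real.exp (-n) * |2 * t - 1| ^ (n + 2) := by
  rcases le_or_gt t (1 / 2) with h | h
  · rw [Psi_of_le h, zero_div, abs_zero]; positivity
  have hs : 0 < 2 * t - 1 := by linarith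
  have hbound := Psi_div_even_pow_le (n + 1) t
  push_cast at hbound
  rw [sub_add_cancel_right] at hbound
  rw [abs_of_nonneg (div_nonneg (Psi_nonneg t) (by positivity)), abs_of_pos hs]
  calc Psi t / (2 * t - 1) ^ n
      = Psi t / (2 * t - 1) ^ (2 * (n + 1)) * (2 * t - 1) ^ (n + 2) := by
        rw [show 2 * (n + 1) = n + (n + 2) by ring, pow_add]; field_simp
    _ ≤ (n + 1) ^ (n + 1) * Real.exp (-n) * (2 * t - 1) ^ (n + 2) := by gcongr

lemma hasDerivAt_Psi_div_pow_half (n : ℕ) :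
    HasDerivAt (fun u => Psi u / (2 * u - 1) ^ n) 0 (1 / 2) := by
  have hO : (fun u => Psi u / (2 * u - 1) ^ n) =O[nhds (1 / 2)]
      fun u => ‖u - 1 / 2‖ ^ (n + 2) := by
    refine .of_bound ((n + 1) ^ (n + 1) * Real.exp (-n) * 2 ^ (n + 2)) (.of_forall fun u => ?_)
    have hs : |2 * u - 1| = 2 * |u - 1 / 2| := by
      rw [← abs_two, ← abs_mul, abs_two]; congr 1; ring
    rw [norm_pow, norm_norm, Real.norm_eq_abs, Real.norm_eq_abs, mul_assoc, ← mul_pow, ← hs]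
    exact abs_Psi_div_pow_le n u
  simpa using (hO.hasFDerivAt (by lia)).hasDerivAt

lemma hasDerivAt_Psi_div_pow_of_lt (n : ℕ) {t : ℝ} (h : 1 / 2 < t) :
    HasDerivAt (fun u => Psi u / (2 * u - 1) ^ n)
      (4 * (Psi t / (2 * t - 1) ^ (n + 3)) - 2 * n * (Psi t / (2 * t - 1) ^ (n + 1))) t := by
  have hs : 2 * t - 1 ≠ 0 := by linarith
  have hlin : HasDerivAt (fun u : ℝ => 2 * u - 1) 2 t := by
    simpa using ((hasDerivAt_id t).const_mul 2).sub_const 1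
  have hexp := (((hlin.fun_pow 2).fun_inv (pow_ne_zero 2 hs)).const_sub 1).exp
  have hquot := hexp.fun_div (hlin.fun_pow n) (pow_ne_zero n hs)
  refine (hquot.congr_deriv ?_).congr_of_eventuallyEq ?_
  · rw [Psi_of_lt h]
    rcases n with _ | n
    · simp only [Nat.cast_ofNat, Nat.cast_zero, Nat.add_one_sub_one, pow_one, pow_zero, mul_one,
        mul_zero, zero_mul, one_pow, div_one]
      field_simp
      ring
    · simp only [Nat.cast_ofNat, Nat.cast_add, Nat.cast_one, Nat.add_one_sub_one, pow_one]
      field_simp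
      ring
  · filter_upwards [Ioi_mem_nhds h] with u hu
    rw [Psi_of_lt hu, one_div]

lemma hasDerivAt_Psi_div_pow (n : ℕ) (t : ℝ) :
    HasDerivAt (fun u => Psi u / (2 * u - 1) ^ n)
      (4 * (Psi t / (2 * t - 1) ^ (n + 3)) - 2 * n * (Psi t / (2 * t - 1) ^ (n + 1))) t := by
  rcases lt_trichotomy t (1 / 2) with h | rfl | h
  · rw [Psi_of_le h.le]
    refine ((hasDerivAt_const t (0 : ℝ)).congr_deriv (by simp)).congr_of_eventuallyEq ?_
    filter_upwards [Iio_mem_nhds h] with u hu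
    rw [Psi_of_le (le_of_lt hu), zero_div]
  · exact (hasDerivAt_Psi_div_pow_half n).congr_deriv (by simp [Psi_of_le])
  · exact hasDerivAt_Psi_div_pow_of_lt n h

lemma hasDerivAt_Psi (t : ℝ) : HasDerivAt Psi (4 * (Psi t / (2 * t - 1) ^ 3)) t := by
  simpa using hasDerivAt_Psi_div_pow 0 t

lemma differentiable_Psi : Differentiable ℝ Psi := fun t => (hasDerivAt_Psi t).differentiableAt

lemma deriv_Psi : deriv Psi = fun t => 4 * (Psi t / (2 * t - 1) ^ 3) :=
  deriv_eq hasDerivAt_Psi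

lemma hasDerivAt_deriv_Psi (t : ℝ) : HasDerivAt (deriv Psi)
    (16 * (Psi t / (2 * t - 1) ^ 6) - 24 * (Psi t / (2 * t - 1) ^ 4)) t := by
  rw [deriv_Psi]
  exact ((hasDerivAt_Psi_div_pow 3 t).const_mul 4).congr_deriv (by push_cast; ring)

lemma deriv_Psi_of_le {t : ℝ} (h : t ≤ 1 / 2) : deriv Psi t = 0 := by
  simp [deriv_Psi, Psi_of_le h]

lemma deriv_Psi_nonneg (t : ℝ) : 0 ≤ deriv Psi t := by
  rcases le_or_gt t (1 / 2) with h | h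
  · rw [deriv_Psi_of_le h]
  · have hs : 0 < 2 * t - 1 := by linarith
    rw [deriv_Psi]
    exact mul_nonneg (by norm_num) (div_nonneg (Psi_nonneg t) (by positivity))

lemma deriv_Psi_le (t : ℝ) : deriv Psi t ≤ 5 := by
  -- AM-GM, `2 / s ^ 3 ≤ 1 / s ^ 2 + 1 / s ^ 4`, reduces to the even powers of `s = 2 * t - 1`.
  have amgm : 2 * (Psi t / (2 * t - 1) ^ 3) ≤
      Psi t / (2 * t - 1) ^ 2 + Psi t / (2 * t - 1) ^ 4 := by
    have h := mul_nonneg (Psi_nonneg t) (sq_nonneg ((2 * t - 1)⁻¹ - (2 * t - 1)⁻¹ ^ 2))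
    simp only [div_eq_mul_inv, ← inv_pow]
    linarith
  rw [deriv_Psi]
  linarith [Psi_div_sq_le t, Psi_div_pow_four_le t]

lemma lipschitzWith_deriv_Psi : LipschitzWith 59 (deriv Psi) := by
  refine lipschitzWith_of_nnnorm_deriv_le
    (fun t => (hasDerivAt_deriv_Psi t).differentiableAt) fun t => ?_
  rw [← NNReal.coe_le_coe, coe_nnnorm, (hasDerivAt_deriv_Psi t).deriv, Real.norm_eq_abs, abs_le]
  have hfour : 0 ≤ Psi t / (2 * t - 1) ^ 4 := div_nonneg (Psi_nonneg t) (by positivity)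
  have hsix : 0 ≤ Psi t / (2 * t - 1) ^ 6 := div_nonneg (Psi_nonneg t) (by positivity)
  push_cast
  constructor <;> linarith [Psi_div_pow_four_le t, Psi_div_pow_six_le t]

lemma Psi_neg_add_Psi_nonneg (t : ℝ) : 0 ≤ Psi (-t) + Psi t :=
  add_nonneg (Psi_nonneg _) (Psi_nonneg _)

lemma Psi_neg_add_Psi_le (t : ℝ) : Psi (-t) + Psi t ≤ 2.72 := by
  rcases le_total t 0 with h | h
  · simpa [Psi_of_le (h.trans one_half_pos.le)] using Psi_le (-t)
  · simpa [Psi_of_le ((neg_nonpos.2 h).trans one_half_pos.le)] using Psi_le t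

lemma lipschitzWith_Psi_neg_add_Psi : LipschitzWith 5 fun t => Psi (-t) + Psi t := by
  have hderiv (t : ℝ) :
      HasDerivAt (fun t => Psi (-t) + Psi t) (-deriv Psi (-t) + deriv Psi t) t := by
    have hneg := (differentiable_Psi (-t)).hasDerivAt.comp t (hasDerivAt_neg t)
    exact (hneg.add (differentiable_Psi t).hasDerivAt).congr_deriv (by ring)
  refine lipschitzWith_of_nnnorm_deriv_le (fun t => (hderiv t).differentiableAt) fun t => ?_
  rw [← NNReal.coe_le_coe, coe_nnnorm, (hderiv t).deriv, Real.norm_eq_abs, abs_le]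
  push_cast
  constructor <;>
    linarith [deriv_Psi_nonneg t, deriv_Psi_nonneg (-t), deriv_Psi_le t, deriv_Psi_le (-t)]

/-! ### The function `Φ` -/

lemma integrable_exp_neg_sq_div_two : Integrable fun τ : ℝ => Real.exp (-τ ^ 2 / 2) :=
  (integrable_exp_neg_mul_sq one_half_pos).congr (.of_forall fun τ => by simp only; ring_nf)

lemma hasDerivAt_Phi (t : ℝ) : HasDerivAt Phi (Real.exp ((1 - t ^ 2) / 2)) t := by
  have hcont : Continuous fun τ : ℝ => Real.exp (-τ ^ 2 / 2) := by fun_prop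
  refine ((hasDerivAt_integral_Iic integrable_exp_neg_sq_div_two hcont.continuousAt).const_mul
    (Real.sqrt (Real.exp 1))).congr_deriv ?_
  rw [← Real.exp_half, ← Real.exp_add]
  congr 1; ring

lemma deriv_Phi : deriv Phi = fun t => Real.exp ((1 - t ^ 2) / 2) := deriv_eq hasDerivAt_Phi

lemma differentiable_Phi : Differentiable ℝ Phi := fun t => (hasDerivAt_Phi t).differentiableAt

lemma deriv_Phi_neg (t : ℝ) : deriv Phi (-t) = deriv Phi t := by simp [deriv_Phi]

lemma deriv_Phi_nonneg (t : ℝ) : 0 ≤ deriv Phi t := by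
  rw [deriv_Phi]; positivity

lemma deriv_Phi_le (t : ℝ) : deriv Phi t ≤ 1.65 := by
  rw [deriv_Phi]
  exact (Real.exp_le_exp.2 (by linarith [sq_nonneg t])).trans exp_half_le

lemma lipschitzWith_Phi : LipschitzWith 1.65 Phi := by
  refine lipschitzWith_of_nnnorm_deriv_le differentiable_Phi fun t => ?_
  rw [← NNReal.coe_le_coe, coe_nnnorm, Real.norm_of_nonneg (deriv_Phi_nonneg t)]
  exact (deriv_Phi_le t).trans_eq (by norm_num)

lemma lipschitzWith_deriv_Phi : LipschitzWith 1 (deriv Phi) := by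
  have hderiv (t : ℝ) : HasDerivAt (deriv Phi) (-t * deriv Phi t) t := by
    rw [deriv_Phi]
    refine ((((hasDerivAt_id t).fun_pow 2).const_sub 1).div_const 2).exp.congr_deriv ?_
    simp only [id_eq, Nat.cast_ofNat, Nat.add_one_sub_one, pow_one, mul_one]
    ring
  refine lipschitzWith_of_nnnorm_deriv_le (fun t => (hderiv t).differentiableAt) fun t => ?_
  rw [← NNReal.coe_le_coe, coe_nnnorm, (hderiv t).deriv, NNReal.coe_one, Real.norm_eq_abs,
    ← sq_le_one_iff_abs_le_one]
  have hsq : deriv Phi t ^ 2 = Real.exp 1 * Real.exp (-t ^ 2) := by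
    rw [deriv_Phi, ← Real.exp_nat_mul, ← Real.exp_add]
    congr 1; push_cast; ring
  calc (-t * deriv Phi t) ^ 2 = Real.exp 1 * ((t ^ 2) ^ 1 * Real.exp (-t ^ 2)) := by
        rw [mul_pow, hsq]; ring
    _ ≤ Real.exp 1 * ((1 : ℕ) ^ 1 * Real.exp (-(1 : ℕ))) :=
        mul_le_mul_of_nonneg_left (pow_mul_exp_neg_le 1 (sq_nonneg t)) (Real.exp_pos 1).le
    _ = 1 := by simp [← Real.exp_add]

lemma Phi_nonneg (t : ℝ) : 0 ≤ Phi t :=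
  mul_nonneg (Real.sqrt_nonneg _) (integral_nonneg fun _ => (Real.exp_pos _).le)

lemma Phi_neg_add_Phi (t : ℝ) : Phi (-t) + Phi t = Real.sqrt (2 * Real.pi * Real.exp 1) := by
  have hneg : ∫ τ in Set.Iic (-t), Real.exp (-τ ^ 2 / 2)
      = ∫ τ in Set.Ioi t, Real.exp (-τ ^ 2 / 2) := by
    have h := integral_comp_neg_Iic (-t) fun τ : ℝ => Real.exp (-τ ^ 2 / 2)
    simpa using h
  have hsplit := intervalIntegral.integral_Iic_add_Ioi (b := t)
    integrable_exp_neg_sq_div_two.integrableOn integrable_exp_neg_sq_div_two.integrableOn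
  have hgauss : ∫ τ : ℝ, Real.exp (-τ ^ 2 / 2) = Real.sqrt (2 * Real.pi) := by
    convert integral_gaussian (1 / 2) using 3 <;> ring_nf
  rw [Phi, Phi, hneg, ← mul_add, add_comm, hsplit, hgauss, mul_comm,
    ← Real.sqrt_mul (by positivity)]

lemma Phi_neg_add_Phi_le (t : ℝ) : Phi (-t) + Phi t ≤ 4.15 := by
  rw [Phi_neg_add_Phi]
  refine Real.sqrt_le_iff.2 ⟨by norm_num, ?_⟩
  calc 2 * Real.pi * Real.exp 1 ≤ 2 * 3.1416 * 2.72 := by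
        gcongr
        · exact Real.pi_lt_d4.le
        · exact exp_one_le
    _ ≤ 4.15 ^ 2 := by norm_num

/-! ### The functions `Λ` and `Γ` -/

lemma Lam_of_mem {t : ℝ} (h : t ∈ Set.Ioo (1 / 4) (1 / 2)) :
    Lam t = Real.exp (-1 / (100 * (t - 1 / 4) * (1 / 2 - t))) := if_pos h

lemma Lam_of_notMem {t : ℝ} (h : t ∉ Set.Ioo (1 / 4) (1 / 2)) : Lam t = 0 := if_neg h

lemma Lam_nonneg (t : ℝ) : 0 ≤ Lam t := by
  unfold Lam; split_ifs <;> positivity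

lemma Lam_le (t : ℝ) : Lam t ≤ Real.exp (-(16 / 25)) := by
  by_cases h : t ∈ Set.Ioo (1 / 4) (1 / 2)
  · rw [Lam_of_mem h, Real.exp_le_exp,
      div_le_iff₀ (mul_pos (mul_pos (by norm_num) (sub_pos.2 h.1)) (sub_pos.2 h.2))]
    linarith [sq_nonneg (t - 3 / 8)]
  · rw [Lam_of_notMem h]; positivity

lemma measurable_Lam : Measurable Lam :=
  Measurable.ite measurableSet_Ioo (by fun_prop) measurable_const

lemma intervalIntegrable_Lam (a b : ℝ) : IntervalIntegrable Lam volume a b := by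
  refine (intervalIntegrable_const (c := Real.exp (-(16 / 25)))).mono_fun
    measurable_Lam.aestronglyMeasurable (.of_forall fun t => ?_)
  simpa [abs_of_nonneg (Lam_nonneg t)] using Lam_le t

lemma exp_mul_le_one_add {a p : ℝ} (ha : a ≤ Real.log 2) (hp : p ∈ Set.Icc (0 : ℝ) 1) :
    Real.exp (a * p) ≤ 1 + p :=
  calc Real.exp (a * p) ≤ Real.exp (Real.log 2 * p) :=
        Real.exp_le_exp.2 (mul_le_mul_of_nonneg_right ha hp.1)
    _ = (1 + 1) ^ p := by rw [Real.rpow_def_of_pos (by norm_num)]; norm_num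
    _ ≤ 1 + p * 1 := rpow_one_add_le_one_add_mul_self (by norm_num) hp.1 hp.2
    _ = 1 + p := by rw [mul_one]

lemma le_Lam {t : ℝ} (h : (8 * t - 3) ^ 2 ≤ 1 / 2) :
    Real.exp (-(16 / 25)) * (1 - (8 * t - 3) ^ 2) ≤ Lam t := by
  have hmem : t ∈ Set.Ioo (1 / 4) (1 / 2) := ⟨by nlinarith, by nlinarith⟩
  have hpos : 0 < 1 - (8 * t - 3) ^ 2 := by linarith
  -- In terms of `q = z / (1 - z) ∈ [0, 1]` the claim is `exp (16 / 25 * q) ≤ 1 + q`, which follows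
  -- from Bernoulli's inequality `2 ^ q ≤ 1 + q` as `16 / 25 ≤ log 2`.
  set z := (8 * t - 3) ^ 2 with hz
  have hexp : Real.exp (16 / 25 * (z / (1 - z))) ≤ 1 + z / (1 - z) := by
    refine exp_mul_le_one_add (by linarith [Real.log_two_gt_d9]) ⟨by positivity, ?_⟩
    rw [div_le_one hpos]; linarith
  have hinv : 1 - z ≤ Real.exp (-(16 / 25 * (z / (1 - z)))) := by
    rw [Real.exp_neg, le_inv_comm₀ hpos (Real.exp_pos _)]
    refine hexp.trans_eq ?_
    field_simp; ring
  calc Real.exp (-(16 / 25)) * (1 - z)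
      ≤ Real.exp (-(16 / 25)) * Real.exp (-(16 / 25 * (z / (1 - z)))) := by gcongr
    _ = Lam t := by
        have hquad : 100 * (t - 1 / 4) * (1 / 2 - t) = 25 / 16 * (1 - z) := by rw [hz]; ring
        rw [Lam_of_mem hmem, hquad, ← Real.exp_add]
        congr 1; field_simp; ring

lemma exp_le_integral_Lam :
    Real.exp (-(16 / 25)) ≤ 6.9 * ∫ τ in (1 / 4 : ℝ)..(1 / 2 : ℝ), Lam τ := by
  -- On `[23 / 80, 37 / 80]`, where `|8 * t - 3| ≤ 7 / 10`, the minorant of `le_Lam` applies.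
  have hpoly : ∫ t in (23 / 80 : ℝ)..(37 / 80 : ℝ), (1 - (8 * t - 3) ^ 2) = 1757 / 12000 := by
    rw [intervalIntegral.integral_comp_mul_sub (fun v => 1 - v ^ 2) (by norm_num : (8 : ℝ) ≠ 0) 3,
      intervalIntegral.integral_sub (by simp) (by simp)]
    norm_num [integral_pow]
  have hmono : ∫ t in (23 / 80 : ℝ)..(37 / 80 : ℝ), Real.exp (-(16 / 25)) * (1 - (8 * t - 3) ^ 2)
      ≤ ∫ τ in (23 / 80 : ℝ)..(37 / 80 : ℝ), Lam τ := by
    refine intervalIntegral.integral_mono_on (by norm_num)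
      (Continuous.intervalIntegrable (by fun_prop) _ _) (intervalIntegrable_Lam _ _)
      fun t ht => le_Lam ?_
    nlinarith [ht.1, ht.2]
  have hsub : ∫ τ in (23 / 80 : ℝ)..(37 / 80 : ℝ), Lam τ
      ≤ ∫ τ in (1 / 4 : ℝ)..(1 / 2 : ℝ), Lam τ :=
    intervalIntegral.integral_mono_interval (by norm_num) (by norm_num) (by norm_num)
      (.of_forall Lam_nonneg) (intervalIntegrable_Lam _ _)
  rw [intervalIntegral.integral_const_mul, hpoly] at hmono
  linarith [Real.exp_pos (-(16 / 25))]

lemma integral_Lam_pos : 0 < ∫ τ in (1 / 4 : ℝ)..(1 / 2 : ℝ), Lam τ := by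
  linarith [exp_le_integral_Lam, Real.exp_pos (-(16 / 25))]

lemma Gam_sub_Gam (a b : ℝ) :
    Gam a - Gam b = (∫ τ in b..a, Lam τ) / ∫ τ in (1 / 4 : ℝ)..(1 / 2 : ℝ), Lam τ := by
  rw [Gam, Gam, ← sub_div, intervalIntegral.integral_interval_sub_left
    (intervalIntegrable_Lam _ _) (intervalIntegrable_Lam _ _)]

lemma lipschitzWith_Gam : LipschitzWith 6.9 Gam := by
  refine .of_dist_le_mul fun a b => ?_
  have hnum : |∫ τ in b..a, Lam τ| ≤ Real.exp (-(16 / 25)) * |a - b| :=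
    intervalIntegral.norm_integral_le_of_norm_le_const fun t _ => by
      rw [Real.norm_of_nonneg (Lam_nonneg t)]; exact Lam_le t
  rw [Real.dist_eq, Real.dist_eq, Gam_sub_Gam, abs_div, abs_of_pos integral_Lam_pos,
    div_le_iff₀ integral_Lam_pos]
  calc |∫ τ in b..a, Lam τ| ≤ Real.exp (-(16 / 25)) * |a - b| := hnum
    _ ≤ 6.9 * (∫ τ in (1 / 4 : ℝ)..(1 / 2 : ℝ), Lam τ) * |a - b| := by
        gcongr; exact exp_le_integral_Lam
    _ = _ := by push_cast; ring

lemma monotone_Gam : Monotone Gam := fun a b h => by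
  rw [← sub_nonneg, Gam_sub_Gam]
  exact div_nonneg (intervalIntegral.integral_nonneg h fun _ _ => Lam_nonneg _) integral_Lam_pos.le

lemma Gam_of_le {t : ℝ} (h : t ≤ 1 / 4) : Gam t = 0 := by
  have hzero : ∫ τ in (1 / 4 : ℝ)..t, Lam τ = ∫ _ in (1 / 4 : ℝ)..t, 0 :=
    intervalIntegral.integral_congr fun τ hτ => Lam_of_notMem fun hmem => by
      rw [Set.uIcc_of_ge h] at hτ
      exact hmem.1.not_ge hτ.2
  rw [Gam, hzero, intervalIntegral.integral_zero, zero_div]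

lemma Gam_half : Gam (1 / 2) = 1 := div_self integral_Lam_pos.ne'

lemma Gam_of_ge {t : ℝ} (h : 1 / 2 ≤ t) : Gam t = 1 := by
  have hzero : ∫ τ in (1 / 2 : ℝ)..t, Lam τ = ∫ _ in (1 / 2 : ℝ)..t, 0 :=
    intervalIntegral.integral_congr fun τ hτ => Lam_of_notMem fun hmem => by
      rw [Set.uIcc_of_le h] at hτ
      exact hmem.2.not_ge hτ.1
  rw [← Gam_half, ← sub_eq_zero, Gam_sub_Gam, hzero, intervalIntegral.integral_zero, zero_div]

lemma Gam_nonneg (t : ℝ) : 0 ≤ Gam t := by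
  rw [← Gam_of_le (min_le_right t (1 / 4))]
  exact monotone_Gam (min_le_left _ _)

lemma Gam_le_one (t : ℝ) : Gam t ≤ 1 := by
  rw [← Gam_of_ge (le_max_right t (1 / 2))]
  exact monotone_Gam (le_max_left _ _)

/-! ### The links of the chain and their gradients -/

/-- The link `Ψ(-u)Φ(-v) - Ψ(u)Φ(v)` joining consecutive coordinates of the chain function. -/
noncomputable def chainLink (u v : ℝ) : ℝ := Psi (-u) * Phi (-v) - Psi u * Phi v

/-- The partial derivative of `chainLink` in its first variable. -/
noncomputable def chainLinkFst (u v : ℝ) : ℝ :=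
  -(deriv Psi (-u) * Phi (-v) + deriv Psi u * Phi v)

/-- The partial derivative of `chainLink` in its second variable, simplified using that
`deriv Phi` is even. -/
noncomputable def chainLinkSnd (u v : ℝ) : ℝ := -((Psi (-u) + Psi u) * deriv Phi v)

lemma hasFDerivAt_chainLink {E : Type*} [NormedAddCommGroup E] [NormedSpace ℝ E]
    {f g : E → ℝ} {f' g' : E →L[ℝ] ℝ} {x : E} (hf : HasFDerivAt f f' x)
    (hg : HasFDerivAt g g' x) :
    HasFDerivAt (fun z => chainLink (f z) (g z))
      (chainLinkFst (f x) (g x) • f' + chainLinkSnd (f x) (g x) • g') x := by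
  have hPsi (t : ℝ) := (differentiable_Psi t).hasDerivAt
  have hPhi (t : ℝ) := (differentiable_Phi t).hasDerivAt
  have hneg := ((hPsi (-f x)).comp_hasFDerivAt x hf.fun_neg).mul
    ((hPhi (-g x)).comp_hasFDerivAt x hg.fun_neg)
  have hpos := ((hPsi (f x)).comp_hasFDerivAt x hf).mul ((hPhi (g x)).comp_hasFDerivAt x hg)
  refine (hneg.sub hpos).congr_fderiv ?_
  ext v
  simp only [chainLinkFst, chainLinkSnd, deriv_Phi_neg, Function.comp_apply,
    add_apply, sub_apply, smul_apply, neg_apply, smul_eq_mul]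
  ring

lemma chainLinkFst_of_abs_le {u : ℝ} (h : |u| ≤ 1 / 2) (v : ℝ) : chainLinkFst u v = 0 := by
  simp [chainLinkFst, deriv_Psi_of_le (abs_le'.1 h).1, deriv_Psi_of_le (abs_le'.1 h).2]

lemma chainLinkSnd_of_abs_le {u : ℝ} (h : |u| ≤ 1 / 2) (v : ℝ) : chainLinkSnd u v = 0 := by
  simp [chainLinkSnd, Psi_of_le (abs_le'.1 h).1, Psi_of_le (abs_le'.1 h).2]

lemma abs_deriv_Psi_mul_Phi_sub_le (u v u' v' : ℝ) :
    |deriv Psi u * Phi v - deriv Psi u' * Phi v'| ≤ 59 * Phi v * |u - u'| + 8.25 * |v - v'| := by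
  have hPsi : |deriv Psi u - deriv Psi u'| ≤ 59 * |u - u'| :=
    lipschitzWith_deriv_Psi.dist_le_mul u u'
  have hPhi : |Phi v - Phi v'| ≤ 1.65 * |v - v'| := by
    simpa [Real.dist_eq] using lipschitzWith_Phi.dist_le_mul v v'
  calc |deriv Psi u * Phi v - deriv Psi u' * Phi v'|
      ≤ |deriv Psi u - deriv Psi u'| * |Phi v| + |deriv Psi u'| * |Phi v - Phi v'| :=
        abs_mul_sub_mul_le _ _ _ _
    _ ≤ 59 * |u - u'| * Phi v + 5 * (1.65 * |v - v'|) := by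
        rw [abs_of_nonneg (Phi_nonneg v), abs_of_nonneg (deriv_Psi_nonneg u')]
        gcongr
        · exact Phi_nonneg v
        · exact deriv_Psi_le u'
    _ = 59 * Phi v * |u - u'| + 8.25 * |v - v'| := by ring

lemma abs_chainLinkFst_sub_le (u v u' v' : ℝ) :
    |chainLinkFst u v - chainLinkFst u' v'| ≤ 245 * |u - u'| + 16.5 * |v - v'| := by
  have habs_neg (a b : ℝ) : |-a - -b| = |a - b| := by rw [neg_sub_neg, abs_sub_comm]
  have hneg := abs_deriv_Psi_mul_Phi_sub_le (-u) (-v) (-u') (-v')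
  rw [habs_neg u, habs_neg v] at hneg
  have hPhi := mul_le_mul_of_nonneg_right (Phi_neg_add_Phi_le v) (abs_nonneg (u - u'))
  rw [chainLinkFst, chainLinkFst, habs_neg, add_sub_add_comm]
  refine (abs_add_le _ _).trans ?_
  linarith [abs_deriv_Psi_mul_Phi_sub_le u v u' v', abs_nonneg (u - u')]

lemma abs_chainLinkSnd_sub_le (u v u' v' : ℝ) :
    |chainLinkSnd u v - chainLinkSnd u' v'| ≤ 8.25 * |u - u'| + 2.72 * |v - v'| := by
  have hPsi : |(Psi (-u) + Psi u) - (Psi (-u') + Psi u')| ≤ 5 * |u - u'| :=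
    lipschitzWith_Psi_neg_add_Psi.dist_le_mul u u'
  have hPhi : |deriv Phi v - deriv Phi v'| ≤ |v - v'| := by
    simpa [Real.dist_eq] using lipschitzWith_deriv_Phi.dist_le_mul v v'
  calc |chainLinkSnd u v - chainLinkSnd u' v'|
      = |(Psi (-u) + Psi u) * deriv Phi v - (Psi (-u') + Psi u') * deriv Phi v'| := by
        rw [chainLinkSnd, chainLinkSnd, neg_sub_neg, abs_sub_comm]
    _ ≤ _ := abs_mul_sub_mul_le _ _ _ _
    _ ≤ 5 * |u - u'| * 1.65 + 2.72 * |v - v'| := by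
        rw [abs_of_nonneg (deriv_Phi_nonneg v), abs_of_nonneg (Psi_neg_add_Psi_nonneg u')]
        gcongr
        · exact deriv_Phi_nonneg v
        · exact deriv_Phi_le v
        · exact Psi_neg_add_Psi_le u'
    _ = 8.25 * |u - u'| + 2.72 * |v - v'| := by ring

lemma abs_chainLinkSnd_le (u v : ℝ) : |chainLinkSnd u v| ≤ 4.5 := by
  rw [chainLinkSnd, abs_neg, abs_of_nonneg
    (mul_nonneg (Psi_neg_add_Psi_nonneg u) (deriv_Phi_nonneg v))]
  calc (Psi (-u) + Psi u) * deriv Phi v ≤ 2.72 * 1.65 :=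
        mul_le_mul (Psi_neg_add_Psi_le u) (deriv_Phi_le v) (deriv_Phi_nonneg v) (by norm_num)
    _ ≤ 4.5 := by norm_num

section ChainGradient

variable {T : ℕ}

/-- The coordinate preceding `x i`, with the paper's convention that `1` precedes the first one;
this makes the first summand `-Ψ(1)Φ(x₁)` of the chain function a link too. -/
noncomputable def prevCoord (x : EuclideanSpace ℝ (Fin (T + 1))) : Fin (T + 1) → ℝ :=
  Fin.cons 1 fun k => x k.castSucc

/-- The contribution to `∂ᵢF_T` of the link from `x (i - 1)` to `x i`. -/
noncomputable def incomingGrad (x : EuclideanSpace ℝ (Fin (T + 1))) :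
    EuclideanSpace ℝ (Fin (T + 1)) :=
  WithLp.toLp 2 fun i => chainLinkSnd (prevCoord x i) (x i)

/-- The contribution to `∂ᵢF_T` of the link from `x i` to `x (i + 1)`; it is absent, hence zero,
for the last coordinate. -/
noncomputable def outgoingGrad (x : EuclideanSpace ℝ (Fin (T + 1))) :
    EuclideanSpace ℝ (Fin (T + 1)) :=
  WithLp.toLp 2 (Fin.snoc (α := fun _ => ℝ) (fun k => chainLinkFst (x k.castSucc) (x k.succ)) 0)

lemma chainF_eq (x : EuclideanSpace ℝ (Fin (T + 1))) :
    chainF T x = chainLink 1 (x 0) + ∑ i : Fin T, chainLink (x i.castSucc) (x i.succ) := by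
  simp [chainF, chainLink, Psi_of_le (show (-1 : ℝ) ≤ 1 / 2 by norm_num)]

lemma hasGradientAt_chainF (x : EuclideanSpace ℝ (Fin (T + 1))) :
    HasGradientAt (chainF T) (incomingGrad x + outgoingGrad x) x := by
  have hproj (i : Fin (T + 1)) : HasFDerivAt (fun z : EuclideanSpace ℝ (Fin (T + 1)) => z i)
      (PiLp.proj 2 (fun _ => ℝ) i : EuclideanSpace ℝ (Fin (T + 1)) →L[ℝ] ℝ) x :=
    PiLp.hasFDerivAt_apply 2 x i
  have hchain := (hasFDerivAt_chainLink (hasFDerivAt_const (1 : ℝ) x) (hproj 0)).add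
    (HasFDerivAt.fun_sum (u := Finset.univ) fun (i : Fin T) _ =>
      hasFDerivAt_chainLink (hproj i.castSucc) (hproj i.succ))
  rw [hasGradientAt_iff_hasFDerivAt, funext chainF_eq]
  refine hchain.congr_fderiv ?_
  ext v
  have hin : inner ℝ (incomingGrad x) v = chainLinkSnd 1 (x 0) * v 0 +
      ∑ i : Fin T, chainLinkSnd (x i.castSucc) (x i.succ) * v i.succ := by
    simp [PiLp.inner_apply, Fin.sum_univ_succ, incomingGrad, prevCoord, mul_comm]
  have hout : inner ℝ (outgoingGrad x) v =
      ∑ i : Fin T, chainLinkFst (x i.castSucc) (x i.succ) * v i.castSucc := by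
    simp [PiLp.inner_apply, Fin.sum_univ_castSucc, outgoingGrad, mul_comm]
  rw [InnerProductSpace.toDual_apply_apply, inner_add_left, hin, hout]
  simp only [smul_zero, zero_add, Finset.sum_add_distrib, add_apply, smul_apply, sum_apply,
    PiLp.proj_apply, smul_eq_mul]
  ring

lemma gradient_chainF (x : EuclideanSpace ℝ (Fin (T + 1))) :
    gradient (chainF T) x = incomingGrad x + outgoingGrad x :=
  (hasGradientAt_chainF x).gradient

lemma lipschitzWith_incomingGrad : LipschitzWith 11 (incomingGrad (T := T)) := by
  refine .of_dist_le_mul fun x y => ?_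
  have hcoord (i : Fin (T + 1)) : prevCoord x i - prevCoord y i =
      Fin.cons (α := fun _ => ℝ) 0 (fun k => (x - y) k.castSucc) i := by
    refine Fin.cases ?_ (fun k => ?_) i <;> simp [prevCoord]
  rw [dist_eq_norm, dist_eq_norm]
  calc ‖incomingGrad x - incomingGrad y‖
      ≤ 8.25 * ‖(WithLp.toLp 2 (Fin.cons (α := fun _ => ℝ) 0 fun k => (x - y) k.castSucc) :
          EuclideanSpace ℝ (Fin (T + 1)))‖ + 2.72 * ‖x - y‖ :=
        l2_norm_le_add_of_forall_norm_le_add (by norm_num) (by norm_num) fun i => by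
          simp only [← hcoord i]
          exact abs_chainLinkSnd_sub_le _ _ _ _
    _ ≤ 8.25 * ‖x - y‖ + 2.72 * ‖x - y‖ := by gcongr; exact norm_cons_zero_castSucc_le _
    _ ≤ 11 * ‖x - y‖ := by linarith [norm_nonneg (x - y)]

lemma lipschitzWith_outgoingGrad : LipschitzWith 262 (outgoingGrad (T := T)) := by
  refine .of_dist_le_mul fun x y => ?_
  rw [dist_eq_norm, dist_eq_norm]
  calc ‖outgoingGrad x - outgoingGrad y‖
      ≤ 245 * ‖x - y‖ + 16.5 * ‖(WithLp.toLp 2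
          (Fin.snoc (α := fun _ => ℝ) (fun k => (x - y) k.succ) 0) :
          EuclideanSpace ℝ (Fin (T + 1)))‖ :=
        l2_norm_le_add_of_forall_norm_le_add (by norm_num) (by norm_num) fun i => by
          refine Fin.lastCases ?_ (fun k => ?_) i
          · simp [outgoingGrad]
          · simpa [outgoingGrad] using abs_chainLinkFst_sub_le _ _ _ _
    _ ≤ 245 * ‖x - y‖ + 16.5 * ‖x - y‖ := by gcongr; exact norm_snoc_succ_zero_le _
    _ ≤ 262 * ‖x - y‖ := by linarith [norm_nonneg (x - y)]

lemma lipschitzWith_gradient_chainF : LipschitzWith 273 (gradient (chainF T)) := by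
  rw [funext gradient_chainF]
  exact (lipschitzWith_incomingGrad.add lipschitzWith_outgoingGrad).weaken (by norm_num)

end ChainGradient

/-! ### The weights `Θ_i` and the weighted gradient -/

section WeightedGradient

variable {T : ℕ}

/-- The vector `(Γ(|x_i|), …, Γ(|x_T|))`, padded with zeros in the coordinates before `i`. -/
noncomputable def gamTail (i : Fin (T + 1)) (x : EuclideanSpace ℝ (Fin (T + 1))) :
    EuclideanSpace ℝ (Fin (T + 1)) :=
  WithLp.toLp 2 fun j => if i ≤ j then Gam |x j| else 0

lemma Theta_eq (x : EuclideanSpace ℝ (Fin (T + 1))) (i : Fin (T + 1)) :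
    Theta T x i = Gam (1 - ‖gamTail i x‖) := by
  simp [Theta, EuclideanSpace.norm_eq, gamTail, Finset.sum_filter, apply_ite (· ^ 2), apply_ite abs]

lemma Theta_nonneg (x : EuclideanSpace ℝ (Fin (T + 1))) (i : Fin (T + 1)) : 0 ≤ Theta T x i :=
  Gam_nonneg _

lemma Theta_le_one (x : EuclideanSpace ℝ (Fin (T + 1))) (i : Fin (T + 1)) : Theta T x i ≤ 1 :=
  Gam_le_one _

lemma Theta_of_half_le_abs {x : EuclideanSpace ℝ (Fin (T + 1))} {i j : Fin (T + 1)} (hij : i ≤ j)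
    (hj : 1 / 2 ≤ |x j|) : Theta T x i = 0 := by
  have hone : gamTail i x j = 1 := by simp [gamTail, hij, Gam_of_ge hj]
  have hnorm : 1 ≤ ‖gamTail i x‖ := by simpa [hone] using PiLp.norm_apply_le (gamTail i x) j
  rw [Theta_eq]
  exact Gam_of_le (by linarith)

lemma lipschitzWith_gamTail (i : Fin (T + 1)) : LipschitzWith 6.9 (gamTail i) := by
  refine .of_dist_le_mul fun x y => ?_
  have hcoord (j : Fin (T + 1)) : |gamTail i x j - gamTail i y j| ≤ 6.9 * |x j - y j| := by
    by_cases hij : i ≤ j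
    · have hGam : |Gam (|x j|) - Gam (|y j|)| ≤ 6.9 * |(|x j| - |y j|)| := by
        simpa [Real.dist_eq] using lipschitzWith_Gam.dist_le_mul |x j| |y j|
      simp only [gamTail, hij, if_true]
      exact hGam.trans (mul_le_mul_of_nonneg_left (abs_abs_sub_abs_le _ _) (by norm_num))
    · simp only [gamTail, hij, if_false, sub_self, abs_zero]
      positivity
  rw [dist_eq_norm, dist_eq_norm]
  calc ‖gamTail i x - gamTail i y‖ ≤ ‖(6.9 : ℝ) • (x - y)‖ :=
        l2_norm_le_of_forall_norm_le fun j => by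
          rw [PiLp.smul_apply, norm_smul, Real.norm_of_nonneg (by norm_num : (0 : ℝ) ≤ 6.9)]
          exact hcoord j
    _ = 6.9 * ‖x - y‖ := by rw [norm_smul, Real.norm_of_nonneg (by norm_num)]

lemma lipschitzWith_Theta (i : Fin (T + 1)) : LipschitzWith 47.61 fun x => Theta T x i := by
  simp only [Theta_eq]
  have hnorm := (LipschitzWith.const 1).sub (lipschitzWith_one_norm.comp (lipschitzWith_gamTail i))
  exact (lipschitzWith_Gam.comp hnorm).weaken (by norm_num)

/-- The gradient of the chain function with `i`-th coordinate weighted by `Θ_i`: the part of the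
estimator that carries its randomness. -/
noncomputable def weightedGrad (x : EuclideanSpace ℝ (Fin (T + 1))) :
    EuclideanSpace ℝ (Fin (T + 1)) :=
  WithLp.toLp 2 fun i => gradient (chainF T) x i * Theta T x i

lemma gbar_eq (p : ℝ) (x : EuclideanSpace ℝ (Fin (T + 1))) (ξ : ℝ) :
    gbar T p x ξ = gradient (chainF T) x + (ξ / p - 1) • weightedGrad x := by
  ext i
  simp only [gbar, weightedGrad, PiLp.add_apply, PiLp.smul_apply, smul_eq_mul]
  ring

lemma outgoingGrad_of_abs_le {x : EuclideanSpace ℝ (Fin (T + 1))} {i : Fin (T + 1)}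
    (h : |x i| ≤ 1 / 2) : outgoingGrad x i = 0 := by
  induction i using Fin.lastCases with
  | last => simp [outgoingGrad]
  | cast k => simp [outgoingGrad, chainLinkFst_of_abs_le h]

lemma weightedGrad_apply_eq_mul_Theta (x : EuclideanSpace ℝ (Fin (T + 1))) (i : Fin (T + 1)) :
    weightedGrad x i = incomingGrad x i * Theta T x i := by
  have houtgoing : outgoingGrad x i * Theta T x i = 0 := by
    rcases le_total |x i| (1 / 2) with h | h
    · rw [outgoingGrad_of_abs_le h, zero_mul]
    · rw [Theta_of_half_le_abs le_rfl h, mul_zero]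
  rw [weightedGrad, gradient_chainF, PiLp.toLp_apply, PiLp.add_apply, add_mul, houtgoing, add_zero]

lemma Theta_eq_zero_of_weightedGrad_ne_zero {x : EuclideanSpace ℝ (Fin (T + 1))}
    {i k : Fin (T + 1)} (hik : i < k) (hk : weightedGrad x k ≠ 0) : Theta T x i = 0 := by
  obtain ⟨j, rfl⟩ := Fin.exists_succ_eq.2 (Fin.ne_zero_of_lt hik)
  refine Theta_of_half_le_abs (Fin.le_castSucc_iff.2 hik) (le_of_not_ge fun hj => hk ?_)
  have hincoming : incomingGrad x j.succ = 0 :=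
    chainLinkSnd_of_abs_le (by simpa only [prevCoord, Fin.cons_succ] using hj) _
  rw [weightedGrad_apply_eq_mul_Theta, hincoming, zero_mul]

lemma subsingleton_support_weightedGrad (x : EuclideanSpace ℝ (Fin (T + 1))) :
    {i | weightedGrad x i ≠ 0}.Subsingleton := by
  have not_lt {i k : Fin (T + 1)} (hi : weightedGrad x i ≠ 0) (hk : weightedGrad x k ≠ 0) :
      ¬ i < k := fun hik => hi <| by
    rw [weightedGrad_apply_eq_mul_Theta, Theta_eq_zero_of_weightedGrad_ne_zero hik hk, mul_zero]
  exact fun i hi k hk => le_antisymm (le_of_not_gt (not_lt hk hi)) (le_of_not_gt (not_lt hi hk))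

lemma abs_weightedGrad_apply_sub_le (x y : EuclideanSpace ℝ (Fin (T + 1))) (i : Fin (T + 1)) :
    |weightedGrad x i - weightedGrad y i| ≤ 226 * ‖x - y‖ := by
  have hincoming : |incomingGrad x i - incomingGrad y i| ≤ 11 * ‖x - y‖ :=
    (PiLp.norm_apply_le (incomingGrad x - incomingGrad y) i).trans
      (lipschitzWith_incomingGrad.norm_sub_le x y)
  have hTheta : |Theta T x i - Theta T y i| ≤ 47.61 * ‖x - y‖ := by
    simpa using (lipschitzWith_Theta i).norm_sub_le x y
  calc |weightedGrad x i - weightedGrad y i|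
      = |incomingGrad x i * Theta T x i - incomingGrad y i * Theta T y i| := by
        rw [weightedGrad_apply_eq_mul_Theta, weightedGrad_apply_eq_mul_Theta]
    _ ≤ |incomingGrad x i - incomingGrad y i| * |Theta T x i|
          + |incomingGrad y i| * |Theta T x i - Theta T y i| := abs_mul_sub_mul_le _ _ _ _
    _ ≤ 11 * ‖x - y‖ * 1 + 4.5 * (47.61 * ‖x - y‖) := by
        rw [abs_of_nonneg (Theta_nonneg x i)]
        gcongr
        · exact Theta_nonneg x i
        · exact Theta_le_one x i
        · exact abs_chainLinkSnd_le _ _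
    _ ≤ 226 * ‖x - y‖ := by linarith [norm_nonneg (x - y)]

lemma lipschitzWith_weightedGrad : LipschitzWith 328 (weightedGrad (T := T)) := by
  refine .of_dist_le_mul fun x y => ?_
  rw [dist_eq_norm, dist_eq_norm]
  refine le_of_sq_le_sq ?_ (by positivity)
  calc ‖weightedGrad x - weightedGrad y‖ ^ 2 ≤ 2 * (226 * ‖x - y‖) ^ 2 :=
        norm_sub_sq_le_of_subsingleton_support (subsingleton_support_weightedGrad x)
          (subsingleton_support_weightedGrad y) (abs_weightedGrad_apply_sub_le x y)
    _ ≤ (328 * ‖x - y‖) ^ 2 := by nlinarith [sq_nonneg ‖x - y‖]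

end WeightedGradient

/-- For `ξ ∼ Bernoulli(p)`, the smoothed estimator `ḡ_T` is
mean-squared smooth with constant `328/√p`:
`E_ξ‖ḡ_T(x,ξ) − ḡ_T(y,ξ)‖² ≤ (328²/p)‖x − y‖²`.  (Stated for dimension `T + 1`;
the Bernoulli expectation is written out as `p·(value at ξ=1) + (1−p)·(value at ξ=0)`.) -/
theorem gbar_mean_squared_smooth
    (T : ℕ) (p : ℝ) (hp : p ∈ Set.Ioc (0 : ℝ) 1)
    (x y : EuclideanSpace ℝ (Fin (T + 1))) :
    p * ‖gbar T p x 1 - gbar T p y 1‖ ^ 2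
        + (1 - p) * ‖gbar T p x 0 - gbar T p y 0‖ ^ 2
      ≤ 328 ^ 2 / p * ‖x - y‖ ^ 2 := by
  obtain ⟨hp0, hp1⟩ := hp
  have hdiff (ξ : ℝ) : gbar T p x ξ - gbar T p y ξ =
      (gradient (chainF T) x - gradient (chainF T) y)
        + (ξ / p - 1) • (weightedGrad x - weightedGrad y) := by
    rw [gbar_eq, gbar_eq, smul_sub, add_sub_add_comm]
  have hgradient : ‖gradient (chainF T) x - gradient (chainF T) y‖ ≤ 328 * ‖x - y‖ :=
    (lipschitzWith_gradient_chainF.weaken (by norm_num : (273 : NNReal) ≤ 328)).norm_sub_le x y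
  have hweighted : ‖weightedGrad x - weightedGrad y‖ ≤ 328 * ‖x - y‖ :=
    lipschitzWith_weightedGrad.norm_sub_le x y
  have hvariance : 0 ≤ (1 - p) / p := div_nonneg (sub_nonneg.2 hp1) hp0.le
  rw [hdiff, hdiff, bernoulli_mean_norm_sq hp0.ne']
  calc _ ≤ (328 * ‖x - y‖) ^ 2 + (1 - p) / p * (328 * ‖x - y‖) ^ 2 :=
        add_le_add (pow_le_pow_left₀ (norm_nonneg _) hgradient 2) <|
          mul_le_mul_of_nonneg_left (pow_le_pow_left₀ (norm_nonneg _) hweighted 2) hvariance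
    _ = 328 ^ 2 / p * ‖x - y‖ ^ 2 := by field_simp; ring
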